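/- Let d be an odd prime, n ∈ ℕ, and k ≥ 3. Let G ∈ C_k^n with conjugate tuple (U_i, V_i)_{i=1..n}, where U_i = G Z_i G* and V_i = G X_i G*. Then G is semi-Clifford (i.e. G = C₁ D C₂ for Clifford gates C₁, C₂ ∈ C_2^n and a diagonal gate D ∈ C_k^n) if and only if there exists a Lagrangian semibasis {(p_i, q_i)}_{i=1..n} of (ZMod d)^{2n} such that for each i the gate U^{p_i} V^{q_i} := U_1^{p_{i,1}} ⋯ U_n^{p_{i,n}} V_1^{q_{i,1}} ⋯ V_n^{q_{i,n}} is a Pauli gate. -/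

import Mathlib

open Matrix

noncomputable section

/-- The space of `n`-qudit gates: `d^n × d^n` complex matrices indexed by `(ZMod d)^n`. -/
abbrev Mat (d n : ℕ) := Matrix (Fin n → ZMod d) (Fin n → ZMod d) ℂ

/-- The primitive `d`-th root of unity `ω = exp(2πi/d)`. -/
def omega (d : ℕ) : ℂ := Complex.exp (2 * Real.pi * Complex.I / d)

/-- `ω` raised to the canonical integer lift of `c : ZMod d`. -/
def omegaPow (d : ℕ) (c : ZMod d) : ℂ := omega d ^ c.val

/-- The Pauli gate `Z^p`, acting by `Z^p |z⟩ = ω^(p·z) |z⟩`. -/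
def ZP (d n : ℕ) [NeZero d] (p : Fin n → ZMod d) : Mat d n :=
  Matrix.diagonal fun z => omegaPow d (p ⬝ᵥ z)

/-- The Pauli gate `X^q`, acting by `X^q |z⟩ = |z + q⟩`. -/
def XQ (d n : ℕ) [NeZero d] (q : Fin n → ZMod d) : Mat d n :=
  Matrix.of fun z' z => if z' = z + q then 1 else 0

/-- The basic Pauli gate `Z_i`. -/
def Zi (d n : ℕ) [NeZero d] (i : Fin n) : Mat d n := ZP d n (Pi.single i 1)

/-- The basic Pauli gate `X_i`. -/
def Xi (d n : ℕ) [NeZero d] (i : Fin n) : Mat d n := XQ d n (Pi.single i 1)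

/-- The Pauli group `C_1^n`. -/
def Pauli (d n : ℕ) [NeZero d] : Set (Mat d n) :=
  { M | ∃ (c : ZMod d) (p q : Fin n → ZMod d), M = omegaPow d c • (ZP d n p * XQ d n q) }

/-- The Clifford group `C_2^n`. -/
def Clifford (d n : ℕ) [NeZero d] : Set (Mat d n) :=
  { C | C ∈ Matrix.unitaryGroup (Fin n → ZMod d) ℂ ∧ ∀ P ∈ Pauli d n, C * P * Cᴴ ∈ Pauli d n }

/-- The third level `C_3^n` of the Clifford hierarchy. -/
def Third (d n : ℕ) [NeZero d] : Set (Mat d n) :=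
  { G | G ∈ Matrix.unitaryGroup (Fin n → ZMod d) ℂ ∧ ∀ P ∈ Pauli d n, G * P * Gᴴ ∈ Clifford d n }

/-- The quadratic diagonal gate `D_Φ |z⟩ = ω^(zᵀ Φ z) |z⟩`. -/
def quadGate (d n : ℕ) [NeZero d] (Φ : Matrix (Fin n) (Fin n) (ZMod d)) : Mat d n :=
  Matrix.diagonal fun z => omegaPow d (z ⬝ᵥ (Φ *ᵥ z))

/-- A gate is semi-Clifford if it is `C₁ D C₂` for Cliffords `C₁, C₂` and a
diagonal third-level gate `D`. -/
def SemiClifford (d n : ℕ) [NeZero d] (G : Mat d n) : Prop :=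
  ∃ C₁ ∈ Clifford d n, ∃ C₂ ∈ Clifford d n, ∃ D ∈ Third d n, D.IsDiag ∧ G = C₁ * D * C₂

/-- A Clifford gate is almost diagonal if it is `D_Φ P` for symmetric `Φ` and Pauli `P`. -/
def AlmostDiag (d n : ℕ) [NeZero d] (M : Mat d n) : Prop :=
  ∃ Φ : Matrix (Fin n) (Fin n) (ZMod d), Φ.IsSymm ∧ ∃ P ∈ Pauli d n, M = quadGate d n Φ * P

/-- A third-level gate is simplified if its conjugate tuple consists of
almost diagonal Clifford gates. -/
def Simplified (d n : ℕ) [NeZero d] (G : Mat d n) : Prop :=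
  ∀ i : Fin n, AlmostDiag d n (G * Zi d n i * Gᴴ) ∧ AlmostDiag d n (G * Xi d n i * Gᴴ)

/-- The symplectic product on `(ZMod d)⁴`. -/
def symp4 (d : ℕ) (u v : Fin 4 → ZMod d) : ZMod d :=
  u 0 * v 1 - u 1 * v 0 + u 2 * v 3 - u 3 * v 2


/-- The Clifford hierarchy: `CH d n 1` is the Pauli group and
`CH d n (k+1) = { G unitary | G P G* ∈ CH d n k for all Pauli P }`. -/
def CH (d n : ℕ) [NeZero d] : ℕ → Set (Mat d n)
  | 0 => Pauli d n
  | 1 => Pauli d n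
  | (k + 2) => { G | G ∈ Matrix.unitaryGroup (Fin n → ZMod d) ℂ ∧
      ∀ P ∈ Pauli d n, G * P * Gᴴ ∈ CH d n (k + 1) }

/-!
Conjugation by `G` preserves the commutation phases of Pauli gates, so it sends a Lagrangian
semibasis of Paulis that it maps to Paulis onto another Lagrangian semibasis. A Lagrangian
semibasis is the image of the standard one, that of the `Z_i`, under a symplectic map, and averaging
over the Weyl operators implements this map by a Clifford gate. With Clifford gates `A` and `B`
moving the `Z_i` to the image and to the original semibasis, `A⁻¹ G B` commutes with every `Z_i` and
is therefore diagonal. Conversely, a diagonal `D` fixes the `Z_i`, so `A D B` maps the Paulis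
`B⁻¹ Z_i B` to the Paulis `A Z_i A⁻¹`.

The symplectic map is built from a family dual to the semibasis, which exists because `ZMod d` is
its own character group.
-/

section ZModDuality

lemma hasEnoughRootsOfUnity_multiplicative_zmod (d : ℕ) [NeZero d] :
    HasEnoughRootsOfUnity (Multiplicative (ZMod d)) d where
  prim := ⟨.ofAdd 1, by
    rw [IsPrimitiveRoot.iff_orderOf, orderOf_ofAdd_eq_addOrderOf, ZMod.addOrderOf_one]⟩
  cyc :=
    have : IsCyclic (Multiplicative (ZMod d))ˣ :=
      isCyclic_of_surjective toUnits toUnits.surjective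
    inferInstance

variable {d : ℕ} [NeZero d]

lemma exists_dual_ne_zero_of_ne_top {M : Type*} [AddCommGroup M] [Module (ZMod d) M] [Finite M]
    {N : Submodule (ZMod d) M} (hN : N ≠ ⊤) :
    ∃ f : M →ₗ[ZMod d] ZMod d, f ≠ 0 ∧ ∀ x ∈ N, f x = 0 := by
  obtain ⟨a, -, ha⟩ := SetLike.exists_of_lt hN.lt_top
  have : Finite (M ⧸ N) := Finite.of_surjective _ N.mkQ_surjective
  have hexp : Monoid.exponent (Multiplicative (M ⧸ N)) ∣ d :=
    Monoid.exponent_dvd_of_forall_pow_eq_one fun x => by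
      rw [← ofAdd_toAdd x, ← ofAdd_nsmul, ← Nat.cast_smul_eq_nsmul (ZMod d)]
      simp
  have := hasEnoughRootsOfUnity_multiplicative_zmod d
  have := HasEnoughRootsOfUnity.of_dvd (Multiplicative (ZMod d)) hexp
  obtain ⟨ψ, hψ⟩ := CommGroup.exists_apply_ne_one_of_hasEnoughRootsOfUnity
    (Multiplicative (M ⧸ N)) (Multiplicative (ZMod d)) (a := .ofAdd (N.mkQ a))
    (by simpa using ha)
  let g : M ⧸ N →+ ZMod d := (toUnits.symm.toMonoidHom.comp ψ).toAdditive
  refine ⟨(g.toZModLinearMap d).comp N.mkQ, fun h => hψ ?_, fun x hx => ?_⟩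
  · exact toUnits.symm.injective (congrArg Multiplicative.ofAdd (DFunLike.congr_fun h a))
  · simp [(Submodule.Quotient.mk_eq_zero N).2 hx]

lemma exists_dual_family {M N ι : Type*} [AddCommGroup M] [Module (ZMod d) M] [AddCommGroup N]
    [Module (ZMod d) N] [Finite ι] [DecidableEq ι] {B : M →ₗ[ZMod d] N →ₗ[ZMod d] ZMod d}
    (hB : B.SeparatingLeft) {v : ι → M} (hv : LinearIndependent (ZMod d) v) :
    ∃ w : ι → N, ∀ i j, B (v i) (w j) = if i = j then 1 else 0 := by
  have := Fintype.ofFinite ι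
  let evalFamily : N →ₗ[ZMod d] (ι → ZMod d) := LinearMap.pi fun i => B (v i)
  suffices hsurj : LinearMap.range evalFamily = ⊤ by
    choose w hw using fun j => LinearMap.range_eq_top.1 hsurj (Pi.single j 1)
    exact ⟨w, fun i j => (congrFun (hw j) i).trans (Pi.single_apply j 1 i)⟩
  by_contra hne
  obtain ⟨f, hf, hker⟩ := exists_dual_ne_zero_of_ne_top hne
  have hcomb : ∑ i, f (Pi.single i 1) • v i = 0 := hB _ fun y => by
    have hy : f (evalFamily y) = 0 := hker _ ⟨y, rfl⟩
    rw [← hy, ← Finset.univ_sum_single (evalFamily y)]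
    simp only [map_sum, map_smul, LinearMap.sum_apply, LinearMap.smul_apply, smul_eq_mul]
    refine Finset.sum_congr rfl fun i _ => ?_
    rw [mul_comm, ← smul_eq_mul, ← map_smul, ← Pi.single_smul, smul_eq_mul, mul_one]
    rfl
  have hcoeff := Fintype.linearIndependent_iff.1 hv _ hcomb
  exact hf (LinearMap.pi_ext' fun i => LinearMap.ext_ring (hcoeff i))

end ZModDuality

section Phases

variable {d : ℕ} [NeZero d]

lemma omegaPow_eq_stdAddChar (a : ZMod d) : omegaPow d a = ZMod.stdAddChar a := by
  conv_rhs => rw [← ZMod.natCast_zmod_val a, ← Int.cast_natCast, ZMod.stdAddChar_coe]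
  rw [omegaPow, omega, ← Complex.exp_nat_mul]
  congr 1
  push_cast
  ring

lemma omegaPow_zero : omegaPow d 0 = 1 := by
  rw [omegaPow_eq_stdAddChar, AddChar.map_zero_eq_one]

lemma omegaPow_add (a b : ZMod d) : omegaPow d (a + b) = omegaPow d a * omegaPow d b := by
  simp only [omegaPow_eq_stdAddChar, AddChar.map_add_eq_mul]

lemma omegaPow_injective : Function.Injective (omegaPow d) := fun a b hab =>
  ZMod.injective_stdAddChar (by simpa only [omegaPow_eq_stdAddChar] using hab)

lemma star_omegaPow (a : ZMod d) : star (omegaPow d a) = omegaPow d (-a) := by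
  simp only [omegaPow_eq_stdAddChar, AddChar.map_neg_eq_conj, RCLike.star_def]

end Phases

section Symplectic

/-- The discrete phase space `(ZMod d)^{2n}` of pairs `(p, q)` labelling the Pauli gates
`Z^p X^q`. -/
abbrev PhaseSpace (d n : ℕ) := (Fin n → ZMod d) × (Fin n → ZMod d)

/-- The symplectic product `[(p, q), (p', q')] = p · q' - p' · q`, as a bilinear form: it is the
commutation phase of the corresponding Pauli gates. -/
def symp (d n : ℕ) : PhaseSpace d n →ₗ[ZMod d] PhaseSpace d n →ₗ[ZMod d] ZMod d :=
  LinearMap.mk₂ (ZMod d) (fun u v => u.1 ⬝ᵥ v.2 - v.1 ⬝ᵥ u.2)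
    (fun _ _ _ => by simp only [Prod.fst_add, Prod.snd_add, add_dotProduct, dotProduct_add]; ring)
    (fun _ _ _ => by simp [mul_sub])
    (fun _ _ _ => by simp only [Prod.fst_add, Prod.snd_add, add_dotProduct, dotProduct_add]; ring)
    (fun _ _ _ => by simp [mul_sub])

/-- A Lagrangian semibasis of phase space, as a family indexed by `Fin n`. -/
structure IsLagrangianSemibasis {d n : ℕ} (v : Fin n → PhaseSpace d n) : Prop where
  linearIndependent : LinearIndependent (ZMod d) v
  isotropic : ∀ i j, symp d n (v i) (v j) = 0

variable {d n : ℕ}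

lemma symp_apply (u v : PhaseSpace d n) : symp d n u v = u.1 ⬝ᵥ v.2 - v.1 ⬝ᵥ u.2 := rfl

lemma symp_isAlt : (symp d n).IsAlt := fun u => sub_self (u.1 ⬝ᵥ u.2)

lemma symp_separatingLeft : (symp d n).SeparatingLeft := fun u hu => by
  ext i
  · simpa [symp_apply] using hu (0, Pi.single i 1)
  · simpa [symp_apply] using hu (Pi.single i 1, 0)

lemma injective_of_symp_map_eq {S : PhaseSpace d n →ₗ[ZMod d] PhaseSpace d n}
    (hS : ∀ u v, symp d n (S u) (S v) = symp d n u v) :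
    Function.Injective S :=
  (injective_iff_map_eq_zero S).2 fun u hu => symp_separatingLeft u fun v => by
    rw [← hS, hu, map_zero, LinearMap.zero_apply]

lemma isLagrangianSemibasis_single :
    IsLagrangianSemibasis fun i => ((Pi.single i 1, 0) : PhaseSpace d n) where
  linearIndependent := by
    simpa [Function.comp_def] using (Pi.basisFun (ZMod d) (Fin n)).linearIndependent.map'
      (LinearMap.inl (ZMod d) _ (Fin n → ZMod d)) Submodule.ker_inl
  isotropic i j := by simp [symp_apply]

lemma exists_isotropic_dual_family {R M ι : Type*} [CommRing R] [Invertible (2 : R)]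
    [AddCommGroup M] [Module R M] [Finite ι] [DecidableEq ι] {B : M →ₗ[R] M →ₗ[R] R}
    (hB : B.IsAlt) {v w : ι → M} (hv : ∀ i j, B (v i) (v j) = 0)
    (hvw : ∀ i j, B (v i) (w j) = if i = j then 1 else 0) :
    ∃ w' : ι → M, (∀ i j, B (v i) (w' j) = if i = j then 1 else 0) ∧
      ∀ i j, B (w' i) (w' j) = 0 := by
  have := Fintype.ofFinite ι
  have hwv (i j : ι) : B (w i) (v j) = -(if j = i then 1 else 0) := by
    rw [← hB.neg, hvw]
  refine ⟨fun j => w j - ∑ k, (⅟2 * B (w j) (w k)) • v k, fun i j => ?_, fun i j => ?_⟩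
  · simp [hv, hvw]
  · rw [show B (w i - ∑ k, (⅟2 * B (w i) (w k)) • v k) (w j - ∑ k, (⅟2 * B (w j) (w k)) • v k) =
      B (w i) (w j) - ⅟2 * B (w i) (w j) + ⅟2 * B (w j) (w i) by simp [hv, hvw, hwv]; ring,
      ← hB.neg (w i) (w j)]
    linear_combination -B (w i) (w j) * (invOf_mul_self (2 : R))

lemma IsLagrangianSemibasis.exists_isometry [NeZero d] [Invertible (2 : ZMod d)]
    {v : Fin n → PhaseSpace d n} (hv : IsLagrangianSemibasis v) :
    ∃ S : PhaseSpace d n →ₗ[ZMod d] PhaseSpace d n,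
      (∀ a b, symp d n (S a) (S b) = symp d n a b) ∧ ∀ i, S (Pi.single i 1, 0) = v i := by
  obtain ⟨w₀, hvw₀⟩ := exists_dual_family symp_separatingLeft hv.linearIndependent
  obtain ⟨w, hvw, hww⟩ := exists_isotropic_dual_family symp_isAlt hv.isotropic hvw₀
  have hwv (i j : Fin n) : symp d n (w i) (v j) = -(if j = i then 1 else 0) := by
    rw [← symp_isAlt.neg, hvw]
  refine ⟨(Fintype.linearCombination (ZMod d) v).coprod (Fintype.linearCombination (ZMod d) w),
    fun a b => ?_, fun i => ?_⟩
  · simp [Fintype.linearCombination_apply, hv.isotropic, hvw, hwv, hww, symp_apply a b, dotProduct,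
      sub_eq_add_neg, mul_comm]
  · simp [Fintype.linearCombination_apply_single]

end Symplectic

section Pauli

variable {d n : ℕ} [NeZero d]

lemma omegaPow_smul_mem_Pauli_iff {c : ZMod d} {M : Mat d n} :
    omegaPow d c • M ∈ Pauli d n ↔ M ∈ Pauli d n := by
  have smul_mem (a : ZMod d) {N : Mat d n} : N ∈ Pauli d n → omegaPow d a • N ∈ Pauli d n := by
    rintro ⟨b, p, q, rfl⟩
    exact ⟨a + b, p, q, by rw [smul_smul, omegaPow_add]⟩
  refine ⟨fun h => ?_, smul_mem c⟩
  simpa only [smul_smul, ← omegaPow_add, neg_add_cancel, omegaPow_zero, one_smul]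
    using smul_mem (-c) h

lemma finite_Pauli : (Pauli d n).Finite := by
  refine (Set.finite_range fun x : ZMod d × PhaseSpace d n =>
    omegaPow d x.1 • (ZP d n x.2.1 * XQ d n x.2.2)).subset ?_
  rintro M ⟨c, p, q, rfl⟩
  exact ⟨(c, p, q), rfl⟩

lemma isDiag_of_forall_commute_Zi {M : Mat d n} (h : ∀ i, Commute M (Zi d n i)) : M.IsDiag := by
  intro x y hxy
  by_contra hentry
  refine hxy (funext fun i => ?_)
  have hi : M x y * omegaPow d (y i) = omegaPow d (x i) * M x y := by
    simpa [Zi, ZP, Matrix.mul_diagonal, Matrix.diagonal_mul] using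
      congrFun (congrFun (h i).eq x) y
  rw [mul_comm] at hi
  exact (omegaPow_injective (mul_right_cancel₀ hentry hi)).symm

lemma forall_commute_Zi_iff_isDiag {M : Mat d n} :
    (∀ i, Commute M (Zi d n i)) ↔ M.IsDiag := by
  refine ⟨isDiag_of_forall_commute_Zi, fun h i => ?_⟩
  rw [← h.diagonal_diag, Zi, ZP]
  exact Matrix.commute_diagonal _ _

end Pauli

section Weyl

variable {d n : ℕ} [NeZero d] [Invertible (2 : ZMod d)]

/-- The Weyl operator `ω^{-p·q/2} Z^p X^q`. This choice of phase makes the cocycle of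
`weyl u * weyl v` a multiple of the symplectic product, so that every symplectic map respects it. -/
def weyl (v : PhaseSpace d n) : Mat d n :=
  omegaPow d (-(⅟2 * (v.1 ⬝ᵥ v.2))) • (ZP d n v.1 * XQ d n v.2)

lemma weyl_apply (v : PhaseSpace d n) (x y : Fin n → ZMod d) :
    weyl v x y = if x = y + v.2 then omegaPow d (-(⅟2 * (v.1 ⬝ᵥ v.2)) + v.1 ⬝ᵥ x) else 0 := by
  simp [weyl, ZP, XQ, omegaPow_add]

lemma ZP_eq_weyl (p : Fin n → ZMod d) : ZP d n p = weyl (p, 0) := by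
  ext x y
  simp [weyl_apply, ZP, Matrix.diagonal_apply]

lemma XQ_eq_weyl (q : Fin n → ZMod d) : XQ d n q = weyl (0, q) := by
  ext x y
  simp [weyl_apply, XQ, omegaPow_zero]

lemma Zi_eq_weyl (i : Fin n) : Zi d n i = weyl (Pi.single i 1, 0) := ZP_eq_weyl _

lemma weyl_zero : weyl (0 : PhaseSpace d n) = 1 := by
  ext x y
  simp [weyl_apply, Matrix.one_apply, omegaPow_zero]

lemma weyl_mul_weyl (u v : PhaseSpace d n) :
    weyl u * weyl v = omegaPow d (⅟2 * symp d n u v) • weyl (u + v) := by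
  ext x y
  have hterm : (weyl u * weyl v) x y = weyl u x (y + v.2) * weyl v (y + v.2) y := by
    rw [Matrix.mul_apply]
    exact Finset.sum_eq_single_of_mem _ (Finset.mem_univ _) fun b _ hb => by
      rw [weyl_apply v, if_neg hb, mul_zero]
  simp only [hterm, Matrix.smul_apply, weyl_apply, smul_eq_mul, if_true, Prod.fst_add,
    Prod.snd_add, add_comm u.2, ← add_assoc]
  split_ifs with hx
  · rw [hx, ← omegaPow_add, ← omegaPow_add]
    congr 1
    simp only [symp_apply, add_dotProduct, dotProduct_add]
    linear_combination (v.1 ⬝ᵥ u.2) * mul_invOf_self (2 : ZMod d)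
  · simp

lemma weyl_add (u v : PhaseSpace d n) :
    weyl (u + v) = omegaPow d (-(⅟2 * symp d n u v)) • (weyl u * weyl v) := by
  rw [weyl_mul_weyl, smul_smul, ← omegaPow_add, neg_add_cancel, omegaPow_zero, one_smul]

lemma star_weyl (v : PhaseSpace d n) : star (weyl v) = weyl (-v) := by
  ext x y
  have hxy : x = y + -v.2 ↔ y = x + v.2 := by rw [← sub_eq_add_neg, eq_sub_iff_add_eq, eq_comm]
  simp only [Matrix.star_apply, weyl_apply, Prod.fst_neg, Prod.snd_neg, hxy]
  split_ifs with hy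
  · rw [star_omegaPow, hy]
    congr 1
    simp only [dotProduct_add, neg_dotProduct, dotProduct_neg]
    linear_combination (v.1 ⬝ᵥ v.2) * mul_invOf_self (2 : ZMod d)
  · exact star_zero ℂ

lemma weyl_mul_star (v : PhaseSpace d n) : weyl v * star (weyl v) = 1 := by
  rw [star_weyl, weyl_mul_weyl, add_neg_cancel, weyl_zero, map_neg, symp_isAlt.self_eq_zero,
    neg_zero, mul_zero, omegaPow_zero, one_smul]

lemma star_mul_weyl (v : PhaseSpace d n) : star (weyl v) * weyl v = 1 :=
  mul_eq_one_comm.1 (weyl_mul_star v)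

lemma weyl_mem_unitaryGroup (v : PhaseSpace d n) :
    weyl v ∈ Matrix.unitaryGroup (Fin n → ZMod d) ℂ :=
  Matrix.mem_unitaryGroup_iff.2 (weyl_mul_star v)

lemma weyl_ne_zero (v : PhaseSpace d n) : weyl v ≠ 0 :=
  left_ne_zero_of_mul_eq_one (weyl_mul_star v)

lemma weyl_conj_weyl (u v : PhaseSpace d n) :
    weyl u * weyl v * star (weyl u) = omegaPow d (symp d n u v) • weyl v := by
  have hcomm : weyl u * weyl v = omegaPow d (symp d n u v) • (weyl v * weyl u) := by
    rw [weyl_mul_weyl, weyl_mul_weyl, smul_smul, ← omegaPow_add, add_comm u v,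
      ← symp_isAlt.neg u v]
    congr 2
    linear_combination symp d n u v * mul_invOf_self (2 : ZMod d)
  rw [hcomm, smul_mul_assoc, mul_assoc, weyl_mul_star, mul_one]

lemma trace_weyl_eq_zero {u : PhaseSpace d n} (hu : u ≠ 0) : (weyl u).trace = 0 := by
  by_contra htrace
  refine hu (symp_separatingLeft u fun v => ?_)
  have hphase : omegaPow d (symp d n v u) * (weyl u).trace = (weyl u).trace := by
    rw [← smul_eq_mul, ← Matrix.trace_smul, ← weyl_conj_weyl, Matrix.trace_mul_comm, ← mul_assoc,
      star_mul_weyl, one_mul]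
  rw [← symp_isAlt.neg, neg_eq_zero]
  exact omegaPow_injective ((mul_eq_right₀ htrace).1 hphase |>.trans omegaPow_zero.symm)

lemma eq_zero_of_weyl_eq_smul_one {u : PhaseSpace d n} {c : ℂ} (h : weyl u = c • 1) : u = 0 := by
  by_contra hu
  have htrace := trace_weyl_eq_zero hu
  rw [h, Matrix.trace_smul, Matrix.trace_one,
    smul_eq_zero_iff_left (Nat.cast_ne_zero.2 Fintype.card_ne_zero)] at htrace
  exact weyl_ne_zero u (by rw [h, htrace, zero_smul])

lemma mem_Pauli_iff {M : Mat d n} :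
    M ∈ Pauli d n ↔ ∃ (c : ZMod d) (v : PhaseSpace d n), M = omegaPow d c • weyl v := by
  constructor
  · rintro ⟨c, p, q, rfl⟩
    exact ⟨c + ⅟2 * (p ⬝ᵥ q), (p, q), by
      rw [weyl, smul_smul, ← omegaPow_add, add_neg_cancel_right]⟩
  · rintro ⟨c, v, rfl⟩
    exact ⟨c + -(⅟2 * (v.1 ⬝ᵥ v.2)), v.1, v.2, by rw [weyl, smul_smul, ← omegaPow_add]⟩

lemma weyl_mem_Pauli (v : PhaseSpace d n) : weyl v ∈ Pauli d n :=
  mem_Pauli_iff.2 ⟨0, v, by rw [omegaPow_zero, one_smul]⟩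

lemma Zi_mem_Pauli (i : Fin n) : Zi d n i ∈ Pauli d n :=
  Zi_eq_weyl (d := d) i ▸ weyl_mem_Pauli _

lemma eq_smul_one_of_forall_commute_weyl {M : Mat d n} (h : ∀ v, Commute M (weyl v)) :
    M = M 0 0 • 1 := by
  have hdiag : M.IsDiag := isDiag_of_forall_commute_Zi fun i => Zi_eq_weyl (d := d) i ▸ h _
  ext x y
  by_cases hxy : x = y
  · have hshift : M * XQ d n x = XQ d n x * M := XQ_eq_weyl x ▸ (h (0, x)).eq
    subst hxy
    simpa [XQ, Matrix.mul_apply, eq_comm] using congrFun (congrFun hshift x) 0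
  · simp [hdiag hxy, hxy]

end Weyl

section Matrices

variable {m R : Type*} [Fintype m]

lemma sum_trace_smul_eq_zero_of_forall_sum_mul_mul_eq_zero {ι : Type*} [Fintype ι] [CommRing R]
    {B C : ι → Matrix m m R} (h : ∀ A, ∑ k, B k * A * C k = 0) : ∑ k, (B k).trace • C k = 0 := by
  classical
  ext i j
  let E (a : m) : Matrix m m R := vecMulVec (Pi.single a 1) (Pi.single i 1)
  have hentry (k : ι) (a : m) : (B k * E a * C k) a j = B k a a * C k i j := by
    simp [E, Matrix.mul_vecMulVec, Matrix.vecMulVec_mul, vecMulVec_apply]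
  calc (∑ k, (B k).trace • C k) i j = ∑ a, (∑ k, B k * E a * C k) a j := by
        simp only [Matrix.sum_apply, Matrix.smul_apply, hentry, Matrix.trace, Matrix.diag_apply,
          smul_eq_mul, Finset.sum_mul]
        exact Finset.sum_comm
    _ = 0 := by simp only [h, Matrix.zero_apply, Finset.sum_const_zero]

open scoped ComplexOrder in
lemma exists_smul_mem_unitaryGroup [DecidableEq m] {C : Matrix m m ℂ} (hC : C ≠ 0) {r : ℂ}
    (hr : C * star C = r • 1) : ∃ t : ℂ, t • C ∈ Matrix.unitaryGroup m ℂ := by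
  obtain ⟨i, -⟩ : ∃ i, C i ≠ 0 := Function.ne_iff.1 hC
  have hnonneg : 0 ≤ r := by
    have hentry : 0 ≤ (C * star C) i i := (Matrix.posSemidef_self_mul_conjTranspose C).diag_nonneg
    simpa [hr] using hentry
  have hne : r ≠ 0 := by
    rintro rfl
    exact hC (Matrix.self_mul_conjTranspose_eq_zero.1 (hr.trans (zero_smul ℂ 1)))
  obtain ⟨hs, him⟩ := Complex.nonneg_iff.1 hnonneg
  lift r to ℝ using him.symm
  rw [Complex.ofReal_re] at hs
  have hnorm : (√r)⁻¹ * (√r)⁻¹ * r = 1 := by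
    rw [← mul_inv, Real.mul_self_sqrt hs, inv_mul_cancel₀ (Complex.ofReal_ne_zero.1 hne)]
  refine ⟨((√r)⁻¹ : ℝ), Matrix.mem_unitaryGroup_iff.2 ?_⟩
  rw [star_smul, smul_mul_smul_comm, hr, smul_smul, RCLike.star_def, Complex.conj_ofReal,
    ← Complex.ofReal_mul, ← Complex.ofReal_mul, hnorm, Complex.ofReal_one, one_smul]

end Matrices

section Weil

variable {d n : ℕ} [NeZero d] [Invertible (2 : ZMod d)]
  {S : PhaseSpace d n →ₗ[ZMod d] PhaseSpace d n}

/-- The average, up to normalization, of `A` over the action `A ↦ W(S v) A W(v)*` of the Weyl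
operators. It turns an arbitrary matrix into one intertwining `W` with `W ∘ S`. -/
def weylTwirl (S : PhaseSpace d n →ₗ[ZMod d] PhaseSpace d n) (A : Mat d n) : Mat d n :=
  ∑ v, weyl (S v) * A * star (weyl v)

lemma weylTwirl_mul_weyl (hS : ∀ u v, symp d n (S u) (S v) = symp d n u v) (A : Mat d n)
    (u : PhaseSpace d n) : weylTwirl S A * weyl u = weyl (S u) * weylTwirl S A := by
  have hterm (v : PhaseSpace d n) :
      weyl (S u) * (weyl (S v) * A * star (weyl v)) * star (weyl u) =
        weyl (S (u + v)) * A * star (weyl (u + v)) := by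
    rw [map_add, weyl_add, weyl_add, hS, star_smul, star_omegaPow, smul_mul_assoc, smul_mul_assoc,
      mul_smul_comm, smul_smul, ← omegaPow_add, add_neg_cancel, omegaPow_zero, one_smul, star_mul]
    simp only [mul_assoc]
  have hinv : weyl (S u) * weylTwirl S A * star (weyl u) = weylTwirl S A := by
    simp only [weylTwirl, Finset.mul_sum, Finset.sum_mul, hterm]
    exact Equiv.sum_comp (Equiv.addLeft u) fun v => weyl (S v) * A * star (weyl v)
  conv_lhs => rw [← hinv]
  rw [mul_assoc, star_mul_weyl, mul_one]

lemma exists_weylTwirl_ne_zero (hS : ∀ u v, symp d n (S u) (S v) = symp d n u v) :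
    ∃ A, weylTwirl S A ≠ 0 := by
  by_contra! hzero
  have hsum := sum_trace_smul_eq_zero_of_forall_sum_mul_mul_eq_zero
    (B := fun v => weyl (S v)) (C := fun v => star (weyl v)) hzero
  rw [Finset.sum_eq_single_of_mem 0 (Finset.mem_univ _) fun v _ hv => ?_] at hsum
  · simp [weyl_zero, NeZero.ne d] at hsum
  · rw [trace_weyl_eq_zero ((map_ne_zero_iff S (injective_of_symp_map_eq hS)).2 hv), zero_smul]

lemma mul_star_eq_smul_one_of_intertwines (hS : Function.Surjective S) {C : Mat d n}
    (hC : ∀ u, C * weyl u = weyl (S u) * C) : C * star C = (C * star C) 0 0 • 1 := by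
  have hstar (u : PhaseSpace d n) : star C * weyl (S u) = weyl u * star C := by
    have h := congrArg star (hC (-u))
    rw [star_mul, star_mul, map_neg, star_weyl, star_weyl, neg_neg, neg_neg] at h
    exact h.symm
  refine eq_smul_one_of_forall_commute_weyl fun v => ?_
  obtain ⟨u, rfl⟩ := hS v
  rw [Commute, SemiconjBy, mul_assoc, hstar, ← mul_assoc, hC, mul_assoc]

/-- Conjugation `M ↦ U M U*` of gates by a unitary, as an algebra automorphism. -/
abbrev conjBy (U : unitaryGroup (Fin n → ZMod d) ℂ) : Mat d n ≃⋆ₐ[ℂ] Mat d n :=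
  Unitary.conjStarAlgAut ℂ (Mat d n) U

theorem exists_conjBy_weyl_eq (hS : ∀ u v, symp d n (S u) (S v) = symp d n u v) :
    ∃ U : unitaryGroup (Fin n → ZMod d) ℂ, ∀ v, conjBy U (weyl v) = weyl (S v) := by
  obtain ⟨A, hA⟩ := exists_weylTwirl_ne_zero hS
  have hC := weylTwirl_mul_weyl hS A
  have hsurj : Function.Surjective S :=
    Finite.surjective_of_injective (injective_of_symp_map_eq hS)
  obtain ⟨t, ht⟩ := exists_smul_mem_unitaryGroup hA (mul_star_eq_smul_one_of_intertwines hsurj hC)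
  refine ⟨⟨_, ht⟩, fun v => ?_⟩
  rw [Unitary.conjStarAlgAut_apply, smul_mul_assoc, hC, ← mul_smul_comm, mul_assoc,
    Matrix.mem_unitaryGroup_iff.1 ht, mul_one]

end Weil

section WeylGraph

variable {d n : ℕ} [NeZero d] [Invertible (2 : ZMod d)]

/-- The pairs `(u, v)` such that `φ` maps the Weyl operator of `u` to that of `v` up to a phase
`ω^c`. It is the partial linear map of phase space which `φ` induces on the Paulis it sends to
Paulis, encoded by its graph. -/
def weylGraph (φ : Mat d n ≃⋆ₐ[ℂ] Mat d n) :
    Submodule (ZMod d) (PhaseSpace d n × PhaseSpace d n) :=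
  AddSubgroup.toZModSubmodule d
    { carrier := {x | ∃ c, φ (weyl x.1) = omegaPow d c • weyl x.2}
      zero_mem' := ⟨0, by
        rw [Prod.fst_zero, Prod.snd_zero, weyl_zero, map_one, omegaPow_zero, one_smul]⟩
      add_mem' := by
        rintro ⟨u, v⟩ ⟨u', v'⟩ ⟨a, ha⟩ ⟨b, hb⟩
        refine ⟨-(⅟2 * symp d n u u') + (a + b + ⅟2 * symp d n v v'), ?_⟩
        simp only at ha hb
        rw [Prod.fst_add, Prod.snd_add, weyl_add, map_smul, map_mul, ha, hb, smul_mul_smul_comm,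
          weyl_mul_weyl]
        simp only [smul_smul, omegaPow_add]
      neg_mem' := by
        rintro ⟨u, v⟩ ⟨a, ha⟩
        refine ⟨-a, ?_⟩
        simp only at ha
        rw [Prod.fst_neg, Prod.snd_neg, ← star_weyl, map_star, ha, star_smul, star_omegaPow,
          star_weyl] }

variable {φ : Mat d n ≃⋆ₐ[ℂ] Mat d n}

lemma mem_weylGraph {u v : PhaseSpace d n} :
    (u, v) ∈ weylGraph φ ↔ ∃ c, φ (weyl u) = omegaPow d c • weyl v := Iff.rfl

lemma eq_zero_of_mem_weylGraph_zero {u : PhaseSpace d n} (h : (u, 0) ∈ weylGraph φ) : u = 0 := by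
  obtain ⟨c, hc⟩ := mem_weylGraph.1 h
  refine eq_zero_of_weyl_eq_smul_one (c := omegaPow d c) (EquivLike.injective φ ?_)
  rw [hc, weyl_zero, map_smul, map_one]

lemma symp_eq_of_mem_weylGraph {u v u' v' : PhaseSpace d n} (h : (u, v) ∈ weylGraph φ)
    (h' : (u', v') ∈ weylGraph φ) : symp d n u u' = symp d n v v' := by
  obtain ⟨a, ha⟩ := mem_weylGraph.1 h
  obtain ⟨b, hb⟩ := mem_weylGraph.1 h'
  have hconj := congrArg φ (weyl_conj_weyl u u')
  rw [map_mul, map_mul, map_star, map_smul, ha, hb, star_smul, smul_mul_smul_comm,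
    smul_mul_smul_comm, weyl_conj_weyl, star_omegaPow, smul_smul, smul_smul, ← omegaPow_add,
    ← omegaPow_add, ← omegaPow_add, ← omegaPow_add] at hconj
  have hphase := omegaPow_injective (smul_left_injective ℂ (weyl_ne_zero v') hconj)
  linear_combination -hphase

lemma IsLagrangianSemibasis.of_mem_weylGraph {v v' : Fin n → PhaseSpace d n}
    (hv : IsLagrangianSemibasis v) (h : ∀ i, (v i, v' i) ∈ weylGraph φ) :
    IsLagrangianSemibasis v' where
  linearIndependent := by
    let pairs (i : Fin n) : weylGraph φ := ⟨(v i, v' i), h i⟩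
    have hpairs : LinearIndependent (ZMod d) pairs :=
      .of_comp (LinearMap.fst _ _ _ ∘ₗ (weylGraph φ).subtype) hv.linearIndependent
    refine hpairs.map' (LinearMap.snd _ _ _ ∘ₗ (weylGraph φ).subtype) (LinearMap.ker_eq_bot'.2 ?_)
    rintro ⟨⟨x, y⟩, hxy⟩ (rfl : y = 0)
    exact Subtype.ext (Prod.ext (eq_zero_of_mem_weylGraph_zero hxy) rfl)
  isotropic i j := symp_eq_of_mem_weylGraph (h i) (h j) ▸ hv.isotropic i j

end WeylGraph

section CliffordGroup

variable {d n : ℕ} [NeZero d]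

/-- The Clifford group as a subgroup of the unitary group. Only `U P U* ⊆ P` is required of the
Pauli group `P`; closure under inverses holds because `P` is finite. -/
def cliffordGroup (d n : ℕ) [NeZero d] : Subgroup (unitaryGroup (Fin n → ZMod d) ℂ) where
  carrier := {U | Set.MapsTo (conjBy U) (Pauli d n) (Pauli d n)}
  one_mem' P hP := by simpa using hP
  mul_mem' {U V} hU hV P hP := by
    rw [Unitary.conjStarAlgAut_mul_apply]
    exact hU (hV hP)
  inv_mem' {U} hU P hP := by
    have hbij : Set.BijOn (conjBy U) (Pauli d n) (Pauli d n) :=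
      (finite_Pauli.injOn_iff_bijOn_of_mapsTo hU).1 (EquivLike.injective (conjBy U)).injOn
    obtain ⟨Q, hQ, rfl⟩ := hbij.surjOn hP
    rwa [← Unitary.conjStarAlgAut_mul_apply, inv_mul_cancel, map_one, StarAlgEquiv.one_apply]

lemma coe_mem_CH_two_iff {U : unitaryGroup (Fin n → ZMod d) ℂ} :
    (U : Mat d n) ∈ CH d n 2 ↔ U ∈ cliffordGroup d n :=
  ⟨fun h => h.2, fun h => ⟨U.2, h⟩⟩

lemma coe_mem_CH_add_two_iff {k : ℕ} {U : unitaryGroup (Fin n → ZMod d) ℂ} :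
    (U : Mat d n) ∈ CH d n (k + 2) ↔ ∀ P ∈ Pauli d n, conjBy U P ∈ CH d n (k + 1) :=
  ⟨fun h => h.2, fun h => ⟨U.2, h⟩⟩

lemma conjBy_mem_CH {C : unitaryGroup (Fin n → ZMod d) ℂ} (hC : C ∈ cliffordGroup d n) :
    ∀ {k : ℕ} {M : Mat d n}, M ∈ CH d n (k + 1) → conjBy C M ∈ CH d n (k + 1)
  | 0, _, hM => hC hM
  | k + 1, M, hM => by
    lift M to unitaryGroup (Fin n → ZMod d) ℂ using hM.1
    have hcoe : conjBy C (M : Mat d n) = ((C * M * C⁻¹ : unitaryGroup _ ℂ) : Mat d n) := rfl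
    rw [hcoe, coe_mem_CH_add_two_iff]
    intro P hP
    rw [Unitary.conjStarAlgAut_mul_apply, Unitary.conjStarAlgAut_mul_apply]
    exact conjBy_mem_CH hC (coe_mem_CH_add_two_iff.1 hM _ (inv_mem hC hP))

lemma clifford_mul_mul_clifford_mem_CH {k : ℕ} {A U B : unitaryGroup (Fin n → ZMod d) ℂ}
    (hA : A ∈ cliffordGroup d n) (hU : (U : Mat d n) ∈ CH d n (k + 2))
    (hB : B ∈ cliffordGroup d n) :
    ((A * U * B : unitaryGroup _ ℂ) : Mat d n) ∈ CH d n (k + 2) := by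
  refine coe_mem_CH_add_two_iff.2 fun P hP => ?_
  rw [Unitary.conjStarAlgAut_mul_apply, Unitary.conjStarAlgAut_mul_apply]
  exact conjBy_mem_CH hA (coe_mem_CH_add_two_iff.1 hU _ (hB hP))

lemma isDiag_iff_conjBy_Zi {U : unitaryGroup (Fin n → ZMod d) ℂ} :
    (U : Mat d n).IsDiag ↔ ∀ i, conjBy U (Zi d n i) = Zi d n i := by
  rw [← forall_commute_Zi_iff_isDiag]
  refine forall_congr' fun i => ?_
  rw [Unitary.conjStarAlgAut_apply]
  constructor
  · intro h
    rw [h.eq, mul_assoc, Unitary.mul_star_self_of_mem U.2, mul_one]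
  · intro h
    rw [Commute, SemiconjBy, ← congrArg (· * (U : Mat d n)) h]
    simp only [mul_assoc, Unitary.star_mul_self_of_mem U.2, mul_one]

variable [Invertible (2 : ZMod d)]

lemma mem_cliffordGroup_of_forall_weyl {U : unitaryGroup (Fin n → ZMod d) ℂ}
    (h : ∀ v, conjBy U (weyl v) ∈ Pauli d n) : U ∈ cliffordGroup d n := by
  intro P hP
  obtain ⟨c, v, rfl⟩ := mem_Pauli_iff.1 hP
  rw [map_smul, omegaPow_smul_mem_Pauli_iff]
  exact h v

/-- The Weyl operator as an element of the unitary group, to be composed with Clifford gates. -/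
def weylUnitary (u : PhaseSpace d n) : unitaryGroup (Fin n → ZMod d) ℂ :=
  ⟨weyl u, weyl_mem_unitaryGroup u⟩

lemma conjBy_weylUnitary (u v : PhaseSpace d n) :
    conjBy (weylUnitary u) (weyl v) = omegaPow d (symp d n u v) • weyl v :=
  weyl_conj_weyl u v

lemma weylUnitary_mem_cliffordGroup (u : PhaseSpace d n) : weylUnitary u ∈ cliffordGroup d n :=
  mem_cliffordGroup_of_forall_weyl fun v => by
    rw [conjBy_weylUnitary, omegaPow_smul_mem_Pauli_iff]
    exact weyl_mem_Pauli v

lemma IsLagrangianSemibasis.exists_clifford {v : Fin n → PhaseSpace d n}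
    (hv : IsLagrangianSemibasis v) (c : Fin n → ZMod d) :
    ∃ C ∈ cliffordGroup d n, ∀ i, conjBy C (Zi d n i) = omegaPow d (c i) • weyl (v i) := by
  obtain ⟨S, hS, hSv⟩ := hv.exists_isometry
  obtain ⟨U, hU⟩ := exists_conjBy_weyl_eq hS
  have hUmem : U ∈ cliffordGroup d n := mem_cliffordGroup_of_forall_weyl fun u => by
    rw [hU]
    exact weyl_mem_Pauli _
  refine ⟨U * weylUnitary (0, -c), mul_mem hUmem (weylUnitary_mem_cliffordGroup _), fun i => ?_⟩
  have hphase : symp d n (0, -c) (Pi.single i 1, 0) = c i := by simp [symp_apply]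
  rw [Unitary.conjStarAlgAut_mul_apply, Zi_eq_weyl, conjBy_weylUnitary, hphase, map_smul, hU, hSv]

end CliffordGroup

section SemiClifford

variable {d n : ℕ} [NeZero d]

/-- Semi-Clifford gates. No level of the Clifford hierarchy is prescribed for the diagonal factor,
since multiplication by Clifford gates preserves the level. -/
def IsSemiClifford (U : unitaryGroup (Fin n → ZMod d) ℂ) : Prop :=
  ∃ A ∈ cliffordGroup d n, ∃ B ∈ cliffordGroup d n,
    ∃ D : unitaryGroup (Fin n → ZMod d) ℂ, (D : Mat d n).IsDiag ∧ U = A * D * B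

lemma exists_CH_factorization_iff_isSemiClifford {k : ℕ} {U : unitaryGroup (Fin n → ZMod d) ℂ}
    (hU : (U : Mat d n) ∈ CH d n (k + 2)) :
    (∃ C₁ ∈ CH d n 2, ∃ C₂ ∈ CH d n 2, ∃ D ∈ CH d n (k + 2), D.IsDiag ∧ U = C₁ * D * C₂) ↔
      IsSemiClifford U := by
  constructor
  · rintro ⟨A, hA, B, hB, D, hD, hdiag, hmul⟩
    exact ⟨⟨A, hA.1⟩, hA.2, ⟨B, hB.1⟩, hB.2, ⟨D, hD.1⟩, hdiag, Subtype.ext hmul⟩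
  · rintro ⟨A, hA, B, hB, D, hdiag, rfl⟩
    have hD := clifford_mul_mul_clifford_mem_CH (inv_mem hA) hU (inv_mem hB)
    rw [show A⁻¹ * (A * D * B) * B⁻¹ = D by group] at hD
    exact ⟨A, coe_mem_CH_two_iff.2 hA, B, coe_mem_CH_two_iff.2 hB, D, hD, hdiag, rfl⟩

variable [Invertible (2 : ZMod d)] {U : unitaryGroup (Fin n → ZMod d) ℂ}

lemma IsSemiClifford.exists_isLagrangianSemibasis (hU : IsSemiClifford U) :
    ∃ v : Fin n → PhaseSpace d n,
      IsLagrangianSemibasis v ∧ ∀ i, conjBy U (weyl (v i)) ∈ Pauli d n := by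
  obtain ⟨A, hA, B, hB, D, hdiag, rfl⟩ := hU
  choose c v hv using fun i => mem_Pauli_iff.1 (inv_mem hB (Zi_mem_Pauli i))
  refine ⟨v, isLagrangianSemibasis_single.of_mem_weylGraph (φ := conjBy B⁻¹) fun i =>
    ⟨c i, by rw [← hv i, Zi_eq_weyl]⟩, fun i => ?_⟩
  have himage : omegaPow d (c i) • conjBy (A * D * B) (weyl (v i)) = conjBy A (Zi d n i) := by
    rw [← map_smul, ← hv, ← Unitary.conjStarAlgAut_mul_apply, mul_inv_cancel_right,
      Unitary.conjStarAlgAut_mul_apply, isDiag_iff_conjBy_Zi.1 hdiag]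
  rw [← omegaPow_smul_mem_Pauli_iff, himage]
  exact hA (Zi_mem_Pauli i)

lemma IsLagrangianSemibasis.isSemiClifford {v : Fin n → PhaseSpace d n}
    (hv : IsLagrangianSemibasis v) (hU : ∀ i, conjBy U (weyl (v i)) ∈ Pauli d n) :
    IsSemiClifford U := by
  choose c v' hv' using fun i => mem_Pauli_iff.1 (hU i)
  have hlag : IsLagrangianSemibasis v' :=
    hv.of_mem_weylGraph (φ := conjBy U) fun i => ⟨c i, hv' i⟩
  obtain ⟨A, hA, hAZ⟩ := hlag.exists_clifford c
  obtain ⟨B, hB, hBZ⟩ := hv.exists_clifford 0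
  refine ⟨A, hA, B⁻¹, inv_mem hB, A⁻¹ * U * B, isDiag_iff_conjBy_Zi.2 fun i => ?_, by group⟩
  rw [Unitary.conjStarAlgAut_mul_apply, hBZ, Pi.zero_apply, omegaPow_zero, one_smul,
    Unitary.conjStarAlgAut_mul_apply, hv', ← hAZ, ← Unitary.conjStarAlgAut_mul_apply,
    inv_mul_cancel, map_one, StarAlgEquiv.one_apply]

end SemiClifford

section ConjugateTuple

lemma prod_ofFn_addChar_single_pow_val {d n : ℕ} [NeZero d] {M : Type*} [Monoid M]
    (χ : AddChar (Fin n → ZMod d) M) (p : Fin n → ZMod d) :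
    (List.ofFn fun j => χ (Pi.single j 1) ^ (p j).val).prod = χ p := by
  have hpow (j : Fin n) : χ (Pi.single j 1) ^ (p j).val = χ (Pi.single j (p j)) := by
    rw [← AddChar.map_nsmul_eq_pow, ← Pi.single_smul, nsmul_one, ZMod.natCast_zmod_val]
  have hsum : (List.ofFn fun j => Multiplicative.ofAdd (Pi.single j (p j))).prod =
      Multiplicative.ofAdd p := by
    rw [List.prod_ofFn, ← ofAdd_sum, Finset.univ_sum_single]
  have hmap := map_list_prod χ.toMonoidHom
    (List.ofFn fun j => Multiplicative.ofAdd (Pi.single j (p j)))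
  rw [hsum, List.map_ofFn] at hmap
  simp only [hpow]
  exact hmap.symm

variable {d n : ℕ} [NeZero d] [Invertible (2 : ZMod d)]

lemma ZP_add (p p' : Fin n → ZMod d) : ZP d n (p + p') = ZP d n p * ZP d n p' := by
  simp [ZP_eq_weyl, weyl_mul_weyl, symp_apply, omegaPow_zero]

lemma XQ_add (q q' : Fin n → ZMod d) : XQ d n (q + q') = XQ d n q * XQ d n q' := by
  simp [XQ_eq_weyl, weyl_mul_weyl, symp_apply, omegaPow_zero]

lemma prod_ofFn_conj_Zi_pow_val (U : unitaryGroup (Fin n → ZMod d) ℂ) (p : Fin n → ZMod d) :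
    (List.ofFn fun j => ((U : Mat d n) * Zi d n j * (U : Mat d n)ᴴ) ^ (p j).val).prod =
      conjBy U (ZP d n p) :=
  prod_ofFn_addChar_single_pow_val
    { toFun p := conjBy U (ZP d n p)
      map_zero_eq_one' := by rw [ZP_eq_weyl, Prod.mk_zero_zero, weyl_zero, map_one]
      map_add_eq_mul' p p' := by rw [ZP_add, map_mul] } p

lemma prod_ofFn_conj_Xi_pow_val (U : unitaryGroup (Fin n → ZMod d) ℂ) (q : Fin n → ZMod d) :
    (List.ofFn fun j => ((U : Mat d n) * Xi d n j * (U : Mat d n)ᴴ) ^ (q j).val).prod =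
      conjBy U (XQ d n q) :=
  prod_ofFn_addChar_single_pow_val
    { toFun q := conjBy U (XQ d n q)
      map_zero_eq_one' := by rw [XQ_eq_weyl, Prod.mk_zero_zero, weyl_zero, map_one]
      map_add_eq_mul' q q' := by rw [XQ_add, map_mul] } q

lemma conjugate_tuple_prod_mem_Pauli_iff (U : unitaryGroup (Fin n → ZMod d) ℂ)
    (p q : Fin n → ZMod d) :
    (List.ofFn fun j => ((U : Mat d n) * Zi d n j * (U : Mat d n)ᴴ) ^ (p j).val).prod *
        (List.ofFn fun j => ((U : Mat d n) * Xi d n j * (U : Mat d n)ᴴ) ^ (q j).val).prod ∈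
        Pauli d n ↔
      conjBy U (weyl (p, q)) ∈ Pauli d n := by
  rw [prod_ofFn_conj_Zi_pow_val, prod_ofFn_conj_Xi_pow_val, ← map_mul, weyl, map_smul,
    omegaPow_smul_mem_Pauli_iff]

end ConjugateTuple

lemma isUnit_two_zmod_of_odd {d : ℕ} (hd : Odd d) : IsUnit (2 : ZMod d) := by
  rw [← Nat.cast_two, ZMod.isUnit_iff_coprime]
  exact Nat.coprime_two_left.2 hd

theorem stmt14_general (d n k : ℕ) [NeZero d] (hodd : Odd d) (hk : 2 ≤ k)
    (G : Mat d n) (hG : G ∈ CH d n k) :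
    (∃ C₁ ∈ CH d n 2, ∃ C₂ ∈ CH d n 2, ∃ D ∈ CH d n k, D.IsDiag ∧ G = C₁ * D * C₂) ↔
    ∃ p q : Fin n → (Fin n → ZMod d),
      LinearIndependent (ZMod d)
        (fun i => ((p i, q i) : (Fin n → ZMod d) × (Fin n → ZMod d))) ∧
      (∀ i j, p i ⬝ᵥ q j - p j ⬝ᵥ q i = 0) ∧
      ∀ i, (List.ofFn fun j => (G * Zi d n j * Gᴴ) ^ (p i j).val).prod *
           (List.ofFn fun j => (G * Xi d n j * Gᴴ) ^ (q i j).val).prod ∈ Pauli d n := by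
  obtain ⟨k, rfl⟩ := Nat.exists_eq_add_of_le' hk
  have := (isUnit_two_zmod_of_odd hodd).invertible
  lift G to unitaryGroup (Fin n → ZMod d) ℂ using hG.1
  simp only [exists_CH_factorization_iff_isSemiClifford hG, conjugate_tuple_prod_mem_Pauli_iff]
  constructor
  · intro hsemi
    obtain ⟨v, hv, hPauli⟩ := hsemi.exists_isLagrangianSemibasis
    exact ⟨fun i => (v i).1, fun i => (v i).2, hv.linearIndependent, hv.isotropic, hPauli⟩
  · rintro ⟨p, q, hli, hiso, hPauli⟩
    exact IsLagrangianSemibasis.isSemiClifford ⟨hli, hiso⟩ hPauli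

/-- A `k`-th level gate `G` (for `k ≥ 3`) with conjugate tuple `(Uᵢ, Vᵢ)` is semi-Clifford
iff there is a Lagrangian semibasis `{(pᵢ, qᵢ)}` of `(ZMod d)^{2n}` such that each
`U^{pᵢ} V^{qᵢ}` is a Pauli gate. -/
theorem stmt14 (d n k : ℕ) [NeZero d] (hp : Nat.Prime d) (hodd : Odd d) (hk : 3 ≤ k)
    (G : Mat d n) (hG : G ∈ CH d n k) :
    (∃ C₁ ∈ CH d n 2, ∃ C₂ ∈ CH d n 2, ∃ D ∈ CH d n k, D.IsDiag ∧ G = C₁ * D * C₂) ↔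
    ∃ p q : Fin n → (Fin n → ZMod d),
      LinearIndependent (ZMod d)
        (fun i => ((p i, q i) : (Fin n → ZMod d) × (Fin n → ZMod d))) ∧
      (∀ i j, p i ⬝ᵥ q j - p j ⬝ᵥ q i = 0) ∧
      ∀ i, (List.ofFn fun j => (G * Zi d n j * Gᴴ) ^ (p i j).val).prod *
           (List.ofFn fun j => (G * Xi d n j * Gᴴ) ^ (q i j).val).prod ∈ Pauli d n :=
  stmt14_general d n k hodd (by omega) G hG

end
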